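/- Let C : ℝ → ℝ be continuous and strictly monotonically increasing on [0, ∞) with C(0) = 0, let ξ ∈ (0,1) and let α > 0. Then there exists a unique x* ∈ [0, L1max(ξ)] such that α · C(x*) = C(L2(ξ, x*)); moreover, for all L1, L2 ≥ 0 with Rect(L1, L2, D(ξ)) ⊆ P and C(L2) = α · C(L1), one has C(L1) ≤ C(x*). (Theorem 2: the maximal rate R^α_max(ξ) among rate pairs of the form (r, α·r) in the zero-forcing rate region is unique and is attained on the rate region boundary, at r = C(x*).) -/

import Mathlib

/-!
Let `δ = h12 * h21 - h11 * h22 > 0` and `M = 2 * δ * min ξ (1 - ξ) > 0`. Solving for the coordinates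
`(s, t)` of a point of the plane shows that, for nonnegative side lengths, the rectangle with sides
`L1, L2` centred at `D(ξ)` lies in the parallelogram iff
`h22 * L1 + h12 * L2 ≤ M` and `h21 * L1 + h11 * L2 ≤ M` (`rect_subset_iff`).
Consequently `L1max = min (M / h22) (M / h21)` and, on `[0, L1max]`,
`L2(x) = min ((M - h22 * x) / h12) ((M - h21 * x) / h11)`, which is continuous, strictly decreasing,
positive at `0` and zero at `L1max`. Hence `x ↦ α * C x - C (L2 x)` is continuous and strictly
increasing there and changes sign, so it has exactly one zero `x*`. A feasible pair `(L1, L2)` with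
`C L2 = α * C L1` and `L1 > x*` would give `C L2 > α * C x* = C (L2(x*)) ≥ C (L2(L1)) ≥ C L2`.
-/

noncomputable section

/-- The parallelogram `P = { (h11·s + h12·t, h21·s + h22·t) : s,t ∈ [0,1] }`. -/
def Pgram (h11 h12 h21 h22 : ℝ) : Set (ℝ × ℝ) :=
  { v | ∃ s ∈ Set.Icc (0:ℝ) 1, ∃ t ∈ Set.Icc (0:ℝ) 1,
      v = (h11 * s + h12 * t, h21 * s + h22 * t) }

/-- The point `D(ξ)` on the diagonal of the parallelogram. -/
def Dpt (h11 h12 h21 h22 ξ : ℝ) : ℝ × ℝ := (ξ * (h11 + h12), ξ * (h21 + h22))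

/-- Closed axis-aligned rectangle with horizontal side `L1`, vertical side `L2`, midpoint `c`. -/
def Rect (L1 L2 : ℝ) (c : ℝ × ℝ) : Set (ℝ × ℝ) :=
  { v | |v.1 - c.1| ≤ L1 / 2 ∧ |v.2 - c.2| ≤ L2 / 2 }

/-- `L1max(ξ)`: sup of horizontal segment lengths centered at `D(ξ)` fitting inside `P`. -/
def L1max (h11 h12 h21 h22 ξ : ℝ) : ℝ :=
  sSup { L1 | L1 ≥ 0 ∧ Rect L1 0 (Dpt h11 h12 h21 h22 ξ) ⊆ Pgram h11 h12 h21 h22 }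

/-- `L2(ξ, x)`: sup of vertical side lengths of rectangles with horizontal side `x`
centered at `D(ξ)` fitting inside `P`. -/
def L2fun (h11 h12 h21 h22 ξ x : ℝ) : ℝ :=
  sSup { L2 | L2 ≥ 0 ∧ Rect x L2 (Dpt h11 h12 h21 h22 ξ) ⊆ Pgram h11 h12 h21 h22 }

/-- Rectangle with horizontal side `x` extended vertically upwards from `c` by `L2`. -/
def RectUp (x L2 : ℝ) (c : ℝ × ℝ) : Set (ℝ × ℝ) :=
  { v | |v.1 - c.1| ≤ x / 2 ∧ c.2 ≤ v.2 ∧ v.2 ≤ c.2 + L2 }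

/-- Rectangle with horizontal side `x` extended vertically downwards from `c` by `L2`. -/
def RectDown (x L2 : ℝ) (c : ℝ × ℝ) : Set (ℝ × ℝ) :=
  { v | |v.1 - c.1| ≤ x / 2 ∧ c.2 - L2 ≤ v.2 ∧ v.2 ≤ c.2 }

/-- `L2up(ξ, x)`: sup of upward one-sided vertical extensions. -/
def L2up (h11 h12 h21 h22 ξ x : ℝ) : ℝ :=
  sSup { L2 | L2 ≥ 0 ∧ RectUp x L2 (Dpt h11 h12 h21 h22 ξ) ⊆ Pgram h11 h12 h21 h22 }

/-- `L2down(ξ, x)`: sup of downward one-sided vertical extensions. -/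
def L2down (h11 h12 h21 h22 ξ x : ℝ) : ℝ :=
  sSup { L2 | L2 ≥ 0 ∧ RectDown x L2 (Dpt h11 h12 h21 h22 ξ) ⊆ Pgram h11 h12 h21 h22 }

/-- The right-hand side of the two linear constraints that describe the admissible rectangles
centred at `D(ξ)`. -/
def slack (h11 h12 h21 h22 ξ : ℝ) : ℝ := 2 * (h12 * h21 - h11 * h22) * min ξ (1 - ξ)

lemma slack_pos {h11 h12 h21 h22 ξ : ℝ} (hdet : h11 * h22 - h12 * h21 < 0)
    (hξ : ξ ∈ Set.Ioo (0:ℝ) 1) : 0 < slack h11 h12 h21 h22 ξ := by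
  have h1 : 0 < min ξ (1 - ξ) := lt_min hξ.1 (by linarith [hξ.2])
  have h2 : 0 < h12 * h21 - h11 * h22 := by linarith
  unfold slack
  positivity

/-- Cramer's rule: membership in the parallelogram for a point given by its offset `(u, w)`
from `D(ξ)`, with the denominator `δ = h12 * h21 - h11 * h22` cleared. -/
lemma mem_Pgram_iff {h11 h12 h21 h22 : ℝ} (hdet : h11 * h22 - h12 * h21 < 0) (ξ u w : ℝ) :
    (ξ * (h11 + h12) + u, ξ * (h21 + h22) + w) ∈ Pgram h11 h12 h21 h22 ↔
      (-(ξ * (h12 * h21 - h11 * h22)) ≤ h12 * w - h22 * u ∧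
        h12 * w - h22 * u ≤ (1 - ξ) * (h12 * h21 - h11 * h22)) ∧
      (-(ξ * (h12 * h21 - h11 * h22)) ≤ h21 * u - h11 * w ∧
        h21 * u - h11 * w ≤ (1 - ξ) * (h12 * h21 - h11 * h22)) := by
  have hδ : 0 < h12 * h21 - h11 * h22 := by linarith
  constructor
  · rintro ⟨s, ⟨hs0, hs1⟩, t, ⟨ht0, ht1⟩, h⟩
    obtain ⟨h1, h2⟩ := Prod.mk.inj h
    have hu : u = h11 * s + h12 * t - ξ * (h11 + h12) := by linarith
    have hw : w = h21 * s + h22 * t - ξ * (h21 + h22) := by linarith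
    have hs : h12 * w - h22 * u = (s - ξ) * (h12 * h21 - h11 * h22) := by rw [hu, hw]; ring
    have ht : h21 * u - h11 * w = (t - ξ) * (h12 * h21 - h11 * h22) := by rw [hu, hw]; ring
    rw [hs, ht]
    refine ⟨⟨?_, ?_⟩, ?_, ?_⟩ <;> nlinarith
  · rintro ⟨⟨a1, a2⟩, b1, b2⟩
    set δ := h12 * h21 - h11 * h22 with hδdef
    refine ⟨ξ + (h12 * w - h22 * u) / δ, ⟨?_, ?_⟩, ξ + (h21 * u - h11 * w) / δ, ⟨?_, ?_⟩, ?_⟩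
    · have : -ξ ≤ (h12 * w - h22 * u) / δ := by rw [le_div_iff₀ hδ]; linarith
      linarith
    · have : (h12 * w - h22 * u) / δ ≤ 1 - ξ := by rw [div_le_iff₀ hδ]; linarith
      linarith
    · have : -ξ ≤ (h21 * u - h11 * w) / δ := by rw [le_div_iff₀ hδ]; linarith
      linarith
    · have : (h21 * u - h11 * w) / δ ≤ 1 - ξ := by rw [div_le_iff₀ hδ]; linarith
      linarith
    · ext
      · have : h11 * (ξ + (h12 * w - h22 * u) / δ) + h12 * (ξ + (h21 * u - h11 * w) / δ)
            = ξ * (h11 + h12) + u * (δ / δ) := by rw [hδdef]; ring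
        rw [div_self hδ.ne'] at this
        simp only [this, mul_one]
      · have : h21 * (ξ + (h12 * w - h22 * u) / δ) + h22 * (ξ + (h21 * u - h11 * w) / δ)
            = ξ * (h21 + h22) + w * (δ / δ) := by rw [hδdef]; ring
        rw [div_self hδ.ne'] at this
        simp only [this, mul_one]

/-- Since all `hij` are positive, the extreme values of the two Cramer numerators over the
rectangle are attained at opposite corners, which turns containment into two linear inequalities. -/
lemma rect_subset_iff {h11 h12 h21 h22 : ℝ}
    (hpos11 : 0 < h11) (hpos12 : 0 < h12) (hpos21 : 0 < h21) (hpos22 : 0 < h22)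
    (hdet : h11 * h22 - h12 * h21 < 0) (ξ : ℝ) {L1 L2 : ℝ} (hL1 : 0 ≤ L1) (hL2 : 0 ≤ L2) :
    Rect L1 L2 (Dpt h11 h12 h21 h22 ξ) ⊆ Pgram h11 h12 h21 h22 ↔
      h22 * L1 + h12 * L2 ≤ slack h11 h12 h21 h22 ξ ∧
      h21 * L1 + h11 * L2 ≤ slack h11 h12 h21 h22 ξ := by
  have hδ : 0 < h12 * h21 - h11 * h22 := by linarith
  have hle : ∀ y : ℝ, y ≤ slack h11 h12 h21 h22 ξ ↔
      y / 2 ≤ ξ * (h12 * h21 - h11 * h22) ∧ y / 2 ≤ (1 - ξ) * (h12 * h21 - h11 * h22) := by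
    intro y
    rw [← le_min_iff, ← min_mul_of_nonneg _ _ hδ.le, slack]
    constructor <;> intro h <;> linarith
  rw [hle, hle]
  constructor
  · intro h
    have key : ∀ u w : ℝ, |u| ≤ L1 / 2 → |w| ≤ L2 / 2 →
        (ξ * (h11 + h12) + u, ξ * (h21 + h22) + w) ∈ Pgram h11 h12 h21 h22 := by
      intro u w hu hw
      exact h ⟨by simpa [Dpt] using hu, by simpa [Dpt] using hw⟩
    have a1 : |L1 / 2| ≤ L1 / 2 := (abs_of_nonneg (by linarith)).le
    have a2 : |L2 / 2| ≤ L2 / 2 := (abs_of_nonneg (by linarith)).le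
    have k1 := (mem_Pgram_iff hdet _ _ _).1 (key (L1 / 2) (-(L2 / 2)) a1 (by rwa [abs_neg]))
    have k2 := (mem_Pgram_iff hdet _ _ _).1 (key (-(L1 / 2)) (L2 / 2) (by rwa [abs_neg]) a2)
    obtain ⟨⟨p1, p2⟩, p3, p4⟩ := k1
    obtain ⟨⟨q1, q2⟩, q3, q4⟩ := k2
    refine ⟨⟨?_, ?_⟩, ?_, ?_⟩ <;> linarith
  · rintro ⟨⟨p1, p2⟩, p3, p4⟩ ⟨a, b⟩ ⟨hu, hw⟩
    have ea : a = ξ * (h11 + h12) + (a - ξ * (h11 + h12)) := by ring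
    have eb : b = ξ * (h21 + h22) + (b - ξ * (h21 + h22)) := by ring
    simp only [Dpt] at hu hw
    rw [ea, eb, mem_Pgram_iff hdet]
    generalize a - ξ * (h11 + h12) = u at *
    generalize b - ξ * (h21 + h22) = w at *
    obtain ⟨u1, u2⟩ := abs_le.1 hu
    obtain ⟨w1, w2⟩ := abs_le.1 hw
    have e1 := mul_le_mul_of_nonneg_left u1 hpos22.le
    have e2 := mul_le_mul_of_nonneg_left u2 hpos22.le
    have e3 := mul_le_mul_of_nonneg_left w1 hpos12.le
    have e4 := mul_le_mul_of_nonneg_left w2 hpos12.le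
    have e5 := mul_le_mul_of_nonneg_left u1 hpos21.le
    have e6 := mul_le_mul_of_nonneg_left u2 hpos21.le
    have e7 := mul_le_mul_of_nonneg_left w1 hpos11.le
    have e8 := mul_le_mul_of_nonneg_left w2 hpos11.le
    refine ⟨⟨?_, ?_⟩, ?_, ?_⟩ <;> linarith

/-- The explicit form of `L2(ξ, ·)` on `[0, L1max]`, with `M` in the role of the slack. -/
def height (h11 h12 h21 h22 M x : ℝ) : ℝ := min ((M - h22 * x) / h12) ((M - h21 * x) / h11)

lemma height_strictAnti {h11 h12 h21 h22 : ℝ}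
    (hpos11 : 0 < h11) (hpos12 : 0 < h12) (hpos21 : 0 < h21) (hpos22 : 0 < h22) (M : ℝ) :
    StrictAnti (height h11 h12 h21 h22 M) := by
  intro x y hxy
  refine min_lt_min ?_ ?_
  · gcongr
  · gcongr

lemma le_height_iff {h11 h12 h21 h22 : ℝ} (hpos11 : 0 < h11) (hpos12 : 0 < h12) (M x y : ℝ) :
    y ≤ height h11 h12 h21 h22 M x ↔ h22 * x + h12 * y ≤ M ∧ h21 * x + h11 * y ≤ M := by
  rw [height, le_min_iff, le_div_iff₀ hpos12, le_div_iff₀ hpos11]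
  constructor <;> rintro ⟨h1, h2⟩ <;> constructor <;> linarith

lemma L1max_eq {h11 h12 h21 h22 : ℝ}
    (hpos11 : 0 < h11) (hpos12 : 0 < h12) (hpos21 : 0 < h21) (hpos22 : 0 < h22)
    (hdet : h11 * h22 - h12 * h21 < 0) {ξ : ℝ} (hξ : ξ ∈ Set.Ioo (0:ℝ) 1) :
    L1max h11 h12 h21 h22 ξ =
      min (slack h11 h12 h21 h22 ξ / h22) (slack h11 h12 h21 h22 ξ / h21) := by
  have hM := slack_pos hdet hξ
  have hset : { L1 | L1 ≥ 0 ∧ Rect L1 0 (Dpt h11 h12 h21 h22 ξ) ⊆ Pgram h11 h12 h21 h22 } =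
      Set.Icc 0 (min (slack h11 h12 h21 h22 ξ / h22) (slack h11 h12 h21 h22 ξ / h21)) := by
    ext x
    refine and_congr_right fun hx => ?_
    rw [rect_subset_iff hpos11 hpos12 hpos21 hpos22 hdet ξ hx le_rfl, le_min_iff,
      le_div_iff₀ hpos22, le_div_iff₀ hpos21]
    simp [mul_comm]
  rw [L1max, hset, csSup_Icc]
  positivity

/-- For `0 ≤ x ≤ L1max`, expressed as `0 ≤ height x`, the supremum defining `L2(ξ, x)` is over
a nonempty interval. -/
lemma L2fun_eq {h11 h12 h21 h22 : ℝ}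
    (hpos11 : 0 < h11) (hpos12 : 0 < h12) (hpos21 : 0 < h21) (hpos22 : 0 < h22)
    (hdet : h11 * h22 - h12 * h21 < 0) (ξ : ℝ) {x : ℝ} (hx : 0 ≤ x)
    (hh : 0 ≤ height h11 h12 h21 h22 (slack h11 h12 h21 h22 ξ) x) :
    L2fun h11 h12 h21 h22 ξ x = height h11 h12 h21 h22 (slack h11 h12 h21 h22 ξ) x := by
  have hset : { L2 | L2 ≥ 0 ∧ Rect x L2 (Dpt h11 h12 h21 h22 ξ) ⊆ Pgram h11 h12 h21 h22 } =
      Set.Icc 0 (height h11 h12 h21 h22 (slack h11 h12 h21 h22 ξ) x) := by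
    ext y
    refine and_congr_right fun hy => ?_
    rw [rect_subset_iff hpos11 hpos12 hpos21 hpos22 hdet ξ hx hy, le_height_iff hpos11 hpos12]
  rw [L2fun, hset, csSup_Icc hh]

/-- The one-variable part of the argument: the sign change of `α * C x - C (g x)` on `[0, b]`. -/
lemma exists_balance {C g : ℝ → ℝ} (hCcont : ContinuousOn C (Set.Ici (0:ℝ)))
    (hCmono : StrictMonoOn C (Set.Ici (0:ℝ))) (hC0 : C 0 = 0) {α b : ℝ} (hα : 0 < α)
    (hb : 0 ≤ b) (hg : Continuous g) (hanti : StrictAnti g) (hgb : g b = 0) :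
    ∃ x ∈ Set.Icc 0 b, α * C x = C (g x) := by
  have hgnn : ∀ x ∈ Set.Icc 0 b, g x ∈ Set.Ici (0:ℝ) := fun x hx =>
    hgb.symm.le.trans (hanti.antitone hx.2)
  have hcont : ContinuousOn (fun x => α * C x - C (g x)) (Set.Icc 0 b) :=
    (continuousOn_const.mul (hCcont.mono Set.Icc_subset_Ici_self)).sub
      (hCcont.comp hg.continuousOn hgnn)
  have h0 : (fun x => α * C x - C (g x)) 0 ≤ 0 := by
    have := hCmono.monotoneOn Set.self_mem_Ici (hgnn 0 ⟨le_rfl, hb⟩)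
      (hgnn 0 ⟨le_rfl, hb⟩)
    simp only [hC0] at this ⊢
    linarith
  have h1 : 0 ≤ (fun x => α * C x - C (g x)) b := by
    have := hCmono.monotoneOn Set.self_mem_Ici (Set.mem_Ici.2 hb) hb
    rw [hC0] at this
    simp only [hgb, hC0, sub_zero]
    positivity
  obtain ⟨x, hx, hfx⟩ := intermediate_value_Icc hb hcont ⟨h0, h1⟩
  exact ⟨x, hx, sub_eq_zero.1 hfx⟩

theorem stmt17 (h11 h12 h21 h22 : ℝ)
    (hpos11 : 0 < h11) (hpos12 : 0 < h12) (hpos21 : 0 < h21) (hpos22 : 0 < h22)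
    (hdet : h11 * h22 - h12 * h21 < 0)
    (C : ℝ → ℝ) (hCcont : ContinuousOn C (Set.Ici (0:ℝ)))
    (hCmono : StrictMonoOn C (Set.Ici (0:ℝ))) (hC0 : C 0 = 0)
    (ξ : ℝ) (hξ : ξ ∈ Set.Ioo (0:ℝ) 1) (α : ℝ) (hα : 0 < α) :
    ∃ xstar ∈ Set.Icc (0:ℝ) (L1max h11 h12 h21 h22 ξ),
      α * C xstar = C (L2fun h11 h12 h21 h22 ξ xstar) ∧
      (∀ y ∈ Set.Icc (0:ℝ) (L1max h11 h12 h21 h22 ξ),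
        α * C y = C (L2fun h11 h12 h21 h22 ξ y) → y = xstar) ∧
      (∀ L1 L2 : ℝ, 0 ≤ L1 → 0 ≤ L2 →
        Rect L1 L2 (Dpt h11 h12 h21 h22 ξ) ⊆ Pgram h11 h12 h21 h22 →
        C L2 = α * C L1 → C L1 ≤ C xstar) := by
  have hM := slack_pos hdet hξ
  have hmax := L1max_eq hpos11 hpos12 hpos21 hpos22 hdet hξ
  set b := L1max h11 h12 h21 h22 ξ
  set g := height h11 h12 h21 h22 (slack h11 h12 h21 h22 ξ) with hgdef
  have hanti : StrictAnti g := height_strictAnti hpos11 hpos12 hpos21 hpos22 _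
  have hb : 0 ≤ b := by rw [hmax]; positivity
  have hgcont : Continuous g := by
    rw [hgdef]; unfold height; fun_prop
  have hmem : ∀ x, 0 ≤ g x ↔ x ≤ b := by
    intro x
    rw [le_height_iff hpos11 hpos12, hmax, le_min_iff, le_div_iff₀ hpos22, le_div_iff₀ hpos21]
    simp [mul_comm]
  -- `g` is negative to the right of `b`, so `g b ≤ 0` by continuity.
  have hgb : g b = 0 := by
    refine le_antisymm ?_ ((hmem b).2 le_rfl)
    refine le_of_tendsto (hgcont.continuousWithinAt (s := Set.Ioi b) (x := b)) ?_
    filter_upwards [self_mem_nhdsWithin] with x hx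
    exact (not_le.1 fun h => absurd ((hmem x).1 h) (not_le.2 hx)).le
  have hL2 : ∀ x ∈ Set.Icc 0 b, L2fun h11 h12 h21 h22 ξ x = g x := fun x hx =>
    L2fun_eq hpos11 hpos12 hpos21 hpos22 hdet ξ hx.1 ((hmem x).2 hx.2)
  -- A strictly larger abscissa strictly raises `α * C` and lowers `C ∘ g`.
  have hstep : ∀ x ∈ Set.Icc 0 b, ∀ y ∈ Set.Icc 0 b, x < y → α * C x = C (g x) →
      C (g y) < α * C y := by
    intro x hx y hy hxy h
    have h1 : C x < C y := hCmono hx.1 hy.1 hxy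
    have h2 : C (g y) < C (g x) := hCmono ((hmem y).2 hy.2) ((hmem x).2 hx.2) (hanti hxy)
    nlinarith
  obtain ⟨x, hx, hxe⟩ := exists_balance hCcont hCmono hC0 hα hb hgcont hanti hgb
  refine ⟨x, hx, by rw [hL2 x hx]; exact hxe, ?_, ?_⟩
  · intro y hy hye
    rw [hL2 y hy] at hye
    rcases lt_trichotomy x y with h | h | h
    · exact absurd hye (hstep x hx y hy h hxe).ne'
    · exact h.symm
    · exact absurd hxe (hstep y hy x hx h hye).ne'
  · intro L1 L2 hL1 hL2nn hsub hC
    rw [rect_subset_iff hpos11 hpos12 hpos21 hpos22 hdet ξ hL1 hL2nn,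
      ← le_height_iff hpos11 hpos12] at hsub
    have hgL : 0 ≤ g L1 := hL2nn.trans hsub
    by_contra hlt
    have hxL : x < L1 := not_le.1 fun h => hlt (hCmono.monotoneOn hL1 hx.1 h)
    have h1 := hstep x hx L1 ⟨hL1, (hmem L1).1 hgL⟩ hxL hxe
    have h2 : C L2 ≤ C (g L1) := hCmono.monotoneOn hL2nn hgL hsub
    linarith
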